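/- arXiv:1512.01697 — 2 statements merged into one kernel-verified Lean document; each statement's English description precedes it below -/
import Mathlib

section
/- Let g be a finite-dimensional Lie algebra over ℂ with solvable radical r, and let α be an automorphism of g of finite order n whose fixed-point subalgebra has dimension m. Then dim(g/r) ≤ 16·(m·n)^3 + 4·(m·n)^2 + 224·(m·n). -/
/-!
The idea is to bound the rank `r` of the semisimple algebra `s = g ⧸ r(g)` by `m * n`, and then the
dimension of `s` by a cubic polynomial in its rank. No classification is used. The automorphism
induces an automorphism of `s`, still with `n`-th power `1`, and averaging over its powers lifts
fixed points of `s` to fixed points of `g`, so the fixed space of `s` has dimension at most `m`.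

* If all fixed points of a finite-order automorphism are ad-nilpotent, the algebra is solvable
  (`FiniteOrderAut.isSolvable_of_fixed_nilpotent`): modulo the radical, the Killing form shows
  that the eigenspaces of the automorphism vanish one after another.
* Choose `x` in a Cartan subalgebra of the fixed point algebra with minimal Engel subalgebra `E`.
  The fixed points in `E` are ad-nilpotent on `E`, hence `E` is solvable
  (`FiniteOrderAut.exists_fixed_isSolvable_engel`). In a Killing Lie algebra the Killing form is
  nondegenerate on `E`, while Lie's theorem makes commutators of `E` orthogonal to `E`; thus `E` is
  abelian, a Cartan subalgebra stable under the automorphism (`isCartanSubalgebra_engel`).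
* No root vanishes on `x`, so an additive map `ℂ → ℚ` composed with evaluation at `x` defines a
  system of simple roots which the automorphism permutes. Each power of the automorphism then has a
  natural number as trace on `E`, so the formula for the dimension of the fixed space as the mean of
  these traces yields `dim E ≤ n * m` (`FiniteOrderAut.finrank_engel_le`).
* The vectors `(γᵛ ⊗ γᵛ ⊗ γᵛ, γᵛ)`, for `γ` in a set of roots with one representative of each pair of
  opposite roots, are linearly independent (`linearIndependent_corootCube`). Hence there are at
  most `2 * (r ^ 3 + r)` roots and `dim s ≤ 2 * r ^ 3 + 3 * r`.
-/

/-! ### Finite-order automorphisms and the radical -/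

section
open Module LieAlgebra

variable {L : Type*} [LieRing L] [LieAlgebra ℂ L]

/-- `a` is an endomorphism of the Lie algebra `L` with `a ^ n = 1`, that is, an automorphism of
order dividing `n`. It is kept as a linear map, so that powers and eigenspaces apply directly. -/
structure FiniteOrderAut (n : ℕ) (a : L →ₗ[ℂ] L) : Prop where
  pos : 0 < n
  map_lie : ∀ x y : L, a ⁅x, y⁆ = ⁅a x, a y⁆
  pow_eq : a ^ n = 1

variable {n : ℕ} {a : L →ₗ[ℂ] L}

/-- The mean of the powers `a ^ k`, `k < n`; it projects onto the fixed points of `a` when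
`a ^ n = 1`. -/
noncomputable def cyclicMean {V : Type*} [AddCommGroup V] [Module ℂ V] (n : ℕ) (a : V →ₗ[ℂ] V) :
    V →ₗ[ℂ] V :=
  (n : ℂ)⁻¹ • ∑ k ∈ Finset.range n, a ^ k

section
variable {V : Type*} [AddCommGroup V] [Module ℂ V] {b : V →ₗ[ℂ] V}

theorem map_cyclicMean (hn : b ^ n = 1) (x : V) : b (cyclicMean n b x) = cyclicMean n b x := by
  have h : b * ∑ k ∈ Finset.range n, b ^ k = ∑ k ∈ Finset.range n, b ^ k := by
    have := mul_geom_sum b n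
    rw [hn, sub_self, sub_mul, one_mul, sub_eq_zero] at this
    exact this
  simp only [cyclicMean, LinearMap.smul_apply, map_smul]
  congr 1
  exact LinearMap.congr_fun h x

theorem cyclicMean_of_fixed (hn : 0 < n) {x : V} (hx : b x = x) : cyclicMean n b x = x := by
  have : ∀ k, (b ^ k) x = x := fun k => by
    induction k with
    | zero => simp
    | succ k ih => rw [pow_succ, Module.End.mul_apply, hx, ih]
  have hn' : (n : ℂ) ≠ 0 := by exact_mod_cast hn.ne'
  simp [cyclicMean, LinearMap.sum_apply, this, ← Nat.cast_smul_eq_nsmul ℂ, smul_smul, hn']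

theorem iSup_eigenspace_of_pow_eq_one [FiniteDimensional ℂ V] (hn : 0 < n) (hb : b ^ n = 1) :
    ⨆ μ, Module.End.eigenspace b μ = ⊤ := by
  apply Module.End.IsSemisimple.iSup_eigenspace_eq_top
  apply Module.End.isSemisimple_of_squarefree_aeval_eq_zero (p := Polynomial.X ^ n - 1)
  · apply Polynomial.Separable.squarefree
    simpa using Polynomial.separable_X_pow_sub_C (1 : ℂ) (n := n) (by exact_mod_cast hn.ne')
      one_ne_zero
  · simp [hb]

end

theorem isSolvable_comap {L' : Type*} [LieRing L'] [LieAlgebra ℂ L'] (f : L →ₗ⁅ℂ⁆ L')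
    (J : LieIdeal ℂ L') (hJ : IsSolvable J) (hf : IsSolvable f.ker) :
    IsSolvable (J.comap f) := by
  have hD : ∀ k, derivedSeriesOfIdeal ℂ L k (J.comap f) ≤
      (derivedSeriesOfIdeal ℂ L' k J).comap f := by
    intro k
    induction k with
    | zero => exact le_rfl
    | succ k ih =>
      rw [derivedSeriesOfIdeal_succ, derivedSeriesOfIdeal_succ]
      exact (LieSubmodule.mono_lie ih ih).trans (LieIdeal.comap_bracket_le f)
  obtain ⟨k, hk⟩ := IsSolvable.solvable ℂ J
  obtain ⟨l, hl⟩ := IsSolvable.solvable ℂ f.ker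
  rw [LieIdeal.derivedSeries_eq_bot_iff] at hk hl
  refine IsSolvable.mk (R := ℂ) (k := l + k) ?_
  rw [LieIdeal.derivedSeries_eq_bot_iff, derivedSeriesOfIdeal_add, eq_bot_iff, ← hl]
  refine derivedSeriesOfIdeal_mono ((hD k).trans ?_) l
  rw [hk]
  intro x hx
  rw [LieIdeal.mem_comap, LieSubmodule.mem_bot] at hx
  simpa using hx

/-- The quotient map modulo an ideal, as a morphism of Lie algebras. -/
def quotientMk (I : LieIdeal ℂ L) : L →ₗ⁅ℂ⁆ L ⧸ I where
  toLinearMap := (LieSubmodule.Quotient.mk' I : L →ₗ[ℂ] L ⧸ I)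
  map_lie' := rfl

theorem hasTrivialRadical_quotient [FiniteDimensional ℂ L] :
    HasTrivialRadical ℂ (L ⧸ radical ℂ L) := by
  have hs := isSolvable_comap (quotientMk (radical ℂ L)) (radical ℂ (L ⧸ radical ℂ L))
    inferInstance (by
      have : (quotientMk (radical ℂ L)).ker = radical ℂ L := by
        ext x
        exact LieSubmodule.Quotient.mk_eq_zero _
      rw [this]; infer_instance)
  refine ⟨eq_bot_iff.mpr fun y hy => ?_⟩
  obtain ⟨x, rfl⟩ := LieSubmodule.Quotient.surjective_mk' _ y
  have hx := (LieIdeal.solvable_iff_le_radical _ _ _).mp hs (LieIdeal.mem_comap.mpr hy)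
  rw [LieSubmodule.mem_bot]
  exact (LieSubmodule.Quotient.mk_eq_zero _).mpr hx

namespace FiniteOrderAut

theorem iterate_lie (h : FiniteOrderAut n a) (k : ℕ) (x y : L) :
    (a ^ k) ⁅x, y⁆ = ⁅(a ^ k) x, (a ^ k) y⁆ := by
  induction k generalizing x y with
  | zero => simp
  | succ k ih => simp [pow_succ, Module.End.mul_apply, h.map_lie, ih]

theorem pow_pred_mul (h : FiniteOrderAut n a) : a ^ (n - 1) * a = 1 := by
  rw [← pow_succ, Nat.sub_add_cancel h.pos, h.pow_eq]

theorem mul_pow_pred (h : FiniteOrderAut n a) : a * a ^ (n - 1) = 1 := by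
  rw [← pow_succ', Nat.sub_add_cancel h.pos, h.pow_eq]

/-- The Lie algebra automorphism underlying a finite-order automorphism. -/
def toLieEquiv (h : FiniteOrderAut n a) : L ≃ₗ⁅ℂ⁆ L where
  toLinearMap := a
  map_lie' := h.map_lie _ _
  invFun x := (a ^ (n - 1)) x
  left_inv x := LinearMap.congr_fun h.pow_pred_mul x
  right_inv x := LinearMap.congr_fun h.mul_pow_pred x

theorem killingForm_map (h : FiniteOrderAut n a) (x y : L) :
    killingForm ℂ L (a x) (a y) = killingForm ℂ L x y :=
  killingForm_of_equiv_apply h.toLieEquiv x y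

theorem surjective (h : FiniteOrderAut n a) : Function.Surjective a := h.toLieEquiv.surjective
theorem injective (h : FiniteOrderAut n a) : Function.Injective a := h.toLieEquiv.injective

/-- The radical is stable under `a`, so `a` descends to `L ⧸ radical ℂ L`. -/
theorem quotient_radical [FiniteDimensional ℂ L] (h : FiniteOrderAut n a) :
    ∃ b : (L ⧸ radical ℂ L) →ₗ[ℂ] (L ⧸ radical ℂ L), FiniteOrderAut n b ∧
      (∀ x, b (LieSubmodule.Quotient.mk x) = LieSubmodule.Quotient.mk (a x)) := by
  have hle : (radical ℂ L).toSubmodule ≤ (radical ℂ L).toSubmodule.comap a := by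
    have hs := isSolvable_comap h.toLieEquiv.symm.toLieHom (radical ℂ L) inferInstance (by
      have : h.toLieEquiv.symm.toLieHom.ker = ⊥ :=
        (LieHom.ker_eq_bot _).mpr h.toLieEquiv.symm.injective
      rw [this]; infer_instance)
    intro x hx
    refine (LieIdeal.solvable_iff_le_radical _ _ _).mp hs (LieIdeal.mem_comap.mpr ?_)
    have : h.toLieEquiv.symm (a x) = x := h.toLieEquiv.symm_apply_apply x
    change h.toLieEquiv.symm (a x) ∈ _
    rwa [this]
  refine ⟨Submodule.mapQ _ _ a hle, ⟨h.pos, ?_, ?_⟩, fun x => rfl⟩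
  · intro x y
    obtain ⟨x, rfl⟩ := LieSubmodule.Quotient.surjective_mk' _ x
    obtain ⟨y, rfl⟩ := LieSubmodule.Quotient.surjective_mk' _ y
    change LieSubmodule.Quotient.mk (a ⁅x, y⁆) = _
    rw [h.map_lie]; rfl
  · rw [← Submodule.mapQ_pow]
    simp only [h.pow_eq]
    exact Submodule.mapQ_id _

/-- Fixed points of the induced automorphism lift to fixed points, by averaging any lift. -/
theorem exists_fixed_lift [FiniteDimensional ℂ L] (h : FiniteOrderAut n a)
    {b : (L ⧸ radical ℂ L) →ₗ[ℂ] (L ⧸ radical ℂ L)}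
    (hab : ∀ x, b (LieSubmodule.Quotient.mk x) = LieSubmodule.Quotient.mk (a x))
    (y : L ⧸ radical ℂ L) (hy : b y = y) :
    ∃ x, a x = x ∧ LieSubmodule.Quotient.mk x = y := by
  obtain ⟨x, rfl⟩ := LieSubmodule.Quotient.surjective_mk' _ y
  refine ⟨cyclicMean n a x, map_cyclicMean h.pow_eq x, ?_⟩
  conv_rhs => rw [← cyclicMean_of_fixed h.pos hy]
  have hk : ∀ k : ℕ, LieSubmodule.Quotient.mk' (radical ℂ L) ((a ^ k) x) =
      (b ^ k) (LieSubmodule.Quotient.mk' _ x) := by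
    intro k
    induction k with
    | zero => rfl
    | succ k ih => rw [pow_succ', pow_succ', Module.End.mul_apply, Module.End.mul_apply, ← ih]; exact (hab _).symm
  change LieSubmodule.Quotient.mk' (radical ℂ L) _ = _
  simp [cyclicMean, LinearMap.sum_apply, hk]

end FiniteOrderAut

end

/-! ### Ad-nilpotent fixed points force solvability -/

section
open Module LieAlgebra

variable {L : Type*} [LieRing L] [LieAlgebra ℂ L]
variable {n : ℕ} {a : L →ₗ[ℂ] L}

namespace FiniteOrderAut

/-- The Lie subalgebra of fixed points of a finite-order automorphism. -/
def fixed (h : FiniteOrderAut n a) : LieSubalgebra ℂ L where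
  carrier := {x | a x = x}
  add_mem' {x y} hx hy := by
    change a (x + y) = x + y
    rw [map_add, show a x = x from hx, show a y = y from hy]
  zero_mem' := map_zero a
  smul_mem' c x hx := by
    change a (c • x) = c • x
    rw [map_smul, show a x = x from hx]
  lie_mem' {x y} hx hy := by
    change a ⁅x, y⁆ = ⁅x, y⁆
    rw [h.map_lie, show a x = x from hx, show a y = y from hy]

theorem mem_fixed (h : FiniteOrderAut n a) {x : L} : x ∈ h.fixed ↔ a x = x := Iff.rfl

theorem killingForm_cyclicMean (h : FiniteOrderAut n a) {x : L} (hx : a x = x) (y : L) :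
    killingForm ℂ L x (cyclicMean n a y) = killingForm ℂ L x y := by
  have hk : ∀ k : ℕ, killingForm ℂ L x ((a ^ k) y) = killingForm ℂ L x y := by
    intro k
    induction k with
    | zero => rfl
    | succ k ih =>
      rw [pow_succ', Module.End.mul_apply]
      nth_rewrite 1 [← hx]
      rw [h.killingForm_map, ih]
  have hn' : (n : ℂ) ≠ 0 := by exact_mod_cast h.pos.ne'
  simp [cyclicMean, LinearMap.sum_apply, hk, hn']

/-- If all fixed points are ad-nilpotent, then the Killing form vanishes on fixed points by Engel's
theorem, so that a fixed point is orthogonal to everything. -/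
theorem fixed_eq_zero [FiniteDimensional ℂ L] [IsKilling ℂ L] (h : FiniteOrderAut n a)
    (hnil : ∀ x, a x = x → IsNilpotent (ad ℂ L x)) {x : L} (hx : a x = x) : x = 0 := by
  have hN : LieModule.IsNilpotent h.fixed L :=
    (LieModule.isNilpotent_iff_forall' (R := ℂ)).mpr fun z => hnil z.1 z.2
  have h0 : LieModule.traceForm ℂ h.fixed L = 0 :=
    LieModule.traceForm_eq_zero_of_isNilpotent ℂ h.fixed L
  have hxk : x ∈ LieIdeal.killingCompl ℂ L ⊤ := by
    rw [LieIdeal.mem_killingCompl]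
    intro y _
    rw [LieModule.traceForm_comm]
    change killingForm ℂ L x y = 0
    rw [← h.killingForm_cyclicMean hx]
    exact LinearMap.congr_fun₂ h0 ⟨x, hx⟩ ⟨cyclicMean n a y, map_cyclicMean h.pow_eq y⟩
  simpa using hxk

theorem pow_eq_one_of_mem_eigenspace (h : FiniteOrderAut n a) {μ : ℂ} {x : L} (hx0 : x ≠ 0)
    (hx : a x = μ • x) : μ ^ n = 1 := by
  have hk : ∀ k : ℕ, (a ^ k) x = μ ^ k • x := by
    intro k
    induction k with
    | zero => simp
    | succ k ih => rw [pow_succ', Module.End.mul_apply, ih, map_smul, hx, smul_smul, pow_succ]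
  have := hk n
  rw [h.pow_eq, Module.End.one_apply] at this
  by_contra hne
  have h2 : (μ ^ n - 1) • x = 0 := by rw [sub_smul, ← this, one_smul, sub_self]
  rcases smul_eq_zero.mp h2 with h3 | h3
  · exact hne (sub_eq_zero.mp h3)
  · exact hx0 h3

theorem linearMap_ext_eigen [FiniteDimensional ℂ L] (h : FiniteOrderAut n a)
    {W : Type*} [AddCommGroup W] [Module ℂ W] {f : L →ₗ[ℂ] W}
    (hf : ∀ (μ : ℂ) (y : L), a y = μ • y → f y = 0) : f = 0 := by
  rw [← LinearMap.ker_eq_top, eq_top_iff, ← iSup_eigenspace_of_pow_eq_one h.pos h.pow_eq]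
  exact iSup_le fun μ y hy => hf μ y (Module.End.mem_eigenspace_iff.mp hy)

/-- A Lie algebra with nondegenerate Killing form on which a finite-order automorphism has only
ad-nilpotent fixed points is trivial. The eigenspaces `L_i` of eigenvalue `ζ ^ i` vanish one after
another: if `L_j = 0` for `j < i`, an `x` in `L_i` is ad-nilpotent because brackets
with `x` raise the index until it wraps around. -/
theorem eq_zero_of_killing [FiniteDimensional ℂ L] [IsKilling ℂ L] (h : FiniteOrderAut n a)
    (hnil : ∀ x, a x = x → IsNilpotent (ad ℂ L x)) (x : L) : x = 0 := by
  obtain ⟨ζ, hζ⟩ : ∃ ζ : ℂ, IsPrimitiveRoot ζ n := ⟨_, Complex.isPrimitiveRoot_exp n h.pos.ne'⟩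
  have key : ∀ i, i < n → ∀ x, a x = ζ ^ i • x → x = 0 := by
    intro i
    induction i using Nat.strong_induction_on with
    | _ i ih =>
    intro hin x hx
    rcases Nat.eq_zero_or_pos i with rfl | hi
    · exact h.fixed_eq_zero hnil (by simpa using hx)
    have hx_nil : IsNilpotent (ad ℂ L x) := by
      have step : ∀ d j y, n ≤ j + d → j < n + i → a y = ζ ^ j • y → ((ad ℂ L x) ^ d) y = 0 := by
        intro d
        induction d with
        | zero =>
          intro j y h1 h2 hy
          have : y = 0 := by
            refine ih (j - n) (by omega) (by omega) y ?_
            rw [hy, ← one_mul (ζ ^ (j - n)), ← hζ.pow_eq_one, ← pow_add]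
            congr 2; omega
          simp [this]
        | succ d ihd =>
          intro j y h1 h2 hy
          by_cases hj : n ≤ j
          · have : y = 0 := by
              refine ih (j - n) (by omega) (by omega) y ?_
              rw [hy, ← one_mul (ζ ^ (j - n)), ← hζ.pow_eq_one, ← pow_add]
              congr 2; omega
            simp [this]
          · rw [pow_succ, Module.End.mul_apply]
            refine ihd (j + i) _ (by omega) (by omega) ?_
            rw [ad_apply, h.map_lie, hx, hy, smul_lie, lie_smul, smul_smul, ← pow_add, add_comm i]
      refine ⟨n, h.linearMap_ext_eigen fun μ y hy => ?_⟩
      by_cases hy0 : y = 0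
      · simp [hy0]
      have : NeZero n := ⟨h.pos.ne'⟩
      obtain ⟨j, hj, rfl⟩ := hζ.eq_pow_of_pow_eq_one (h.pow_eq_one_of_mem_eigenspace hy0 hy)
      exact step n j y (by omega) (by omega) hy
    have hxk : killingForm ℂ L x = 0 := by
      refine h.linearMap_ext_eigen fun μ y hy => ?_
      by_contra hne
      have hμ : ζ ^ i * μ = 1 := by
        have h1 := h.killingForm_map x y
        rw [hx, hy] at h1
        simp only [map_smul, LinearMap.smul_apply, smul_eq_mul] at h1
        have h2 : (ζ ^ i * μ - 1) * killingForm ℂ L x y = 0 := by linear_combination h1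
        rcases mul_eq_zero.mp h2 with h3 | h3
        · linear_combination h3
        · exact absurd h3 hne
      have hxy : ⁅x, y⁆ = 0 := by
        refine h.fixed_eq_zero hnil ?_
        rw [h.map_lie, hx, hy, smul_lie, lie_smul, smul_smul, hμ, one_smul]
      have hc : Commute (ad ℂ L x) (ad ℂ L y) := by
        refine LinearMap.ext fun z => ?_
        change ⁅x, ⁅y, z⁆⁆ = ⁅y, ⁅x, z⁆⁆
        rw [leibniz_lie x y z, hxy, zero_lie, zero_add]
      refine hne ?_
      rw [killingForm_apply_apply]
      exact (LinearMap.isNilpotent_trace_of_isNilpotent (hc.isNilpotent_mul_right hx_nil)).eq_zero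
    have hxc : x ∈ LieIdeal.killingCompl ℂ L ⊤ := by
      rw [LieIdeal.mem_killingCompl]
      intro y _
      rw [LieModule.traceForm_comm]
      exact LinearMap.congr_fun hxk y
    simpa using hxc
  have hid : (LinearMap.id : L →ₗ[ℂ] L) = 0 := by
    refine h.linearMap_ext_eigen fun μ y hy => ?_
    by_contra hy0
    have : NeZero n := ⟨h.pos.ne'⟩
    obtain ⟨j, hj, rfl⟩ := hζ.eq_pow_of_pow_eq_one (h.pow_eq_one_of_mem_eigenspace hy0 hy)
    exact hy0 (key j hj y hy)
  exact LinearMap.congr_fun hid x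

/-- A Lie algebra on which a finite-order automorphism has only ad-nilpotent fixed points is
solvable. -/
theorem isSolvable_of_fixed_nilpotent [FiniteDimensional ℂ L] (h : FiniteOrderAut n a)
    (hnil : ∀ x, a x = x → IsNilpotent (ad ℂ L x)) : IsSolvable L := by
  obtain ⟨b, hb, hab⟩ := h.quotient_radical
  have := hasTrivialRadical_quotient (L := L)
  have h0 : ∀ y : L ⧸ radical ℂ L, y = 0 := by
    refine hb.eq_zero_of_killing fun y hy => ?_
    obtain ⟨x, hx, rfl⟩ := h.exists_fixed_lift hab y hy
    obtain ⟨k, hk⟩ := hnil x hx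
    refine ⟨k, LinearMap.ext fun z => ?_⟩
    obtain ⟨z, rfl⟩ := LieSubmodule.Quotient.surjective_mk' _ z
    have hpow : ∀ k : ℕ, ((ad ℂ (L ⧸ radical ℂ L) (LieSubmodule.Quotient.mk x)) ^ k)
        (LieSubmodule.Quotient.mk' (radical ℂ L) z) =
        LieSubmodule.Quotient.mk' (radical ℂ L) (((ad ℂ L x) ^ k) z) := by
      intro k
      induction k with
      | zero => rfl
      | succ k ih => rw [pow_succ', pow_succ', Module.End.mul_apply, Module.End.mul_apply, ih]; rfl
    rw [hpow, hk]
    simp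
  have htop : radical ℂ L = ⊤ := by
    rw [eq_top_iff]
    intro x _
    exact (LieSubmodule.Quotient.mk_eq_zero _).mp (h0 (LieSubmodule.Quotient.mk' _ x))
  have hs : IsSolvable (radical ℂ L) := inferInstance
  rw [htop] at hs
  exact (LieAlgebra.solvable_iff_equiv_solvable LieIdeal.topEquiv).mp hs

end FiniteOrderAut
end

/-! ### Solvable Engel subalgebras of Killing Lie algebras -/

section
open Module LieAlgebra

/-- A consequence of Lie's theorem: for a representation of a solvable Lie algebra `E`, the product
of the action of a commutator with the action of any other element is nilpotent. -/
theorem isNilpotent_toEnd_lie_mul {E M : Type*} [LieRing E] [LieAlgebra ℂ E] [IsSolvable E]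
    [AddCommGroup M] [Module ℂ M] [FiniteDimensional ℂ M] [LieRingModule E M] [LieModule ℂ E M]
    (u v w : E) :
    IsNilpotent (LieModule.toEnd ℂ E M ⁅u, v⁆ * LieModule.toEnd ℂ E M w) := by
  set f := LieModule.toEnd ℂ E M ⁅u, v⁆ * LieModule.toEnd ℂ E M w with hf
  let S : Set (LieSubmodule ℂ E M) := {N | ∃ k : ℕ, ∀ x ∈ N, (f ^ k) x = 0}
  have hS : S.Nonempty := ⟨⊥, 0, fun x hx => by simpa using hx⟩
  obtain ⟨N, ⟨k, hk⟩, hmax⟩ := WellFounded.has_min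
    (wellFounded_gt : WellFounded ((· > ·) : LieSubmodule ℂ E M → LieSubmodule ℂ E M → Prop)) S hS
  by_cases hN : N = ⊤
  · exact ⟨k, LinearMap.ext fun x => hk x (by simp [hN])⟩
  exfalso
  have : Nontrivial (M ⧸ N) := Submodule.Quotient.nontrivial_iff.mpr (by simpa using hN)
  have : FiniteDimensional ℂ (M ⧸ N) :=
    inferInstanceAs (FiniteDimensional ℂ (M ⧸ N.toSubmodule))
  obtain ⟨χ, hχ⟩ := LieModule.exists_nontrivial_weightSpace_of_isSolvable ℂ E (M ⧸ N)
  obtain ⟨⟨q, hq⟩, hq0⟩ := exists_ne (0 : LieModule.weightSpace (M ⧸ N) χ)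
  let N' : LieSubmodule ℂ E M :=
    (LieModule.weightSpace (M ⧸ N) χ).comap (LieSubmodule.Quotient.mk' N)
  have hlt : N < N' := by
    refine lt_of_le_of_ne (fun x hx => ?_) fun heq => hq0 ?_
    · rw [LieSubmodule.mem_comap, (LieSubmodule.Quotient.mk_eq_zero N).mpr hx]
      exact zero_mem _
    · obtain ⟨x, rfl⟩ := LieSubmodule.Quotient.surjective_mk' N q
      have hx : x ∈ N := by rw [heq]; exact hq
      exact Subtype.ext ((LieSubmodule.Quotient.mk_eq_zero N).mpr hx)
  refine hmax N' ⟨k + 1, fun x hx => ?_⟩ hlt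
  rw [pow_succ, Module.End.mul_apply]
  refine hk _ ?_
  have hwx : ⁅w, x⁆ ∈ N' := N'.lie_mem hx
  rw [LieSubmodule.mem_comap, LieModule.mem_weightSpace] at hwx
  change ⁅⁅u, v⁆, ⁅w, x⁆⁆ ∈ N
  rw [← LieSubmodule.Quotient.mk_eq_zero N, LieModuleHom.map_lie, lie_lie, hwx, hwx, lie_smul,
    lie_smul, hwx, hwx, smul_comm, sub_self]

variable {L : Type*} [LieRing L] [LieAlgebra ℂ L] [FiniteDimensional ℂ L] [IsKilling ℂ L]

/-- The Killing form of a Killing Lie algebra stays nondegenerate on an Engel subalgebra `E`: by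
Fitting's lemma `E` has a complement in the range of a power of `ad x`, which is orthogonal
to `E`. -/
theorem eq_zero_of_killing_orthogonal_engel {x y : L} (hy : y ∈ LieSubalgebra.engel ℂ x)
    (h : ∀ e ∈ LieSubalgebra.engel ℂ x, killingForm ℂ L y e = 0) : y = 0 := by
  have hxc : y ∈ LieIdeal.killingCompl ℂ L ⊤ := by
    rw [LieIdeal.mem_killingCompl]
    intro v _
    rw [LieModule.traceForm_comm]
    change killingForm ℂ L y v = 0
    obtain ⟨k, hk⟩ := (LieSubalgebra.mem_engel_iff ℂ x y).mp hy
    obtain ⟨l, hl⟩ := Filter.eventually_atTop.mp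
      (LinearMap.eventually_codisjoint_ker_pow_range_pow (ad ℂ L x))
    have hcod := hl (max k l) (le_max_right _ _)
    obtain ⟨e, he, r, ⟨s, rfl⟩, rfl⟩ := Submodule.mem_sup.mp
      (show v ∈ _ ⊔ _ by rw [hcod.eq_top]; trivial)
    have hmove : ∀ (j : ℕ) (y : L), ((ad ℂ L x) ^ j) y = 0 →
        killingForm ℂ L y (((ad ℂ L x) ^ j) s) = 0 := by
      intro j
      induction j with
      | zero => intro y hy; rw [pow_zero] at hy; rw [show y = 0 from hy]; simp
      | succ j ih =>
        intro y hy
        rw [pow_succ', Module.End.mul_apply, ad_apply]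
        have h1 : killingForm ℂ L ⁅y, x⁆ (((ad ℂ L x) ^ j) s) = 0 := by
          refine ih _ ?_
          rw [pow_succ, Module.End.mul_apply, ad_apply] at hy
          rw [← lie_skew, map_neg, hy, neg_zero]
        rwa [LieModule.traceForm_apply_lie_apply] at h1
    rw [map_add, h e ((LieSubalgebra.mem_engel_iff ℂ x e).mpr ⟨_, he⟩), zero_add]
    refine hmove _ _ ?_
    rw [← Nat.sub_add_cancel (le_max_left k l), pow_add, Module.End.mul_apply, hk, map_zero]
  simpa using hxc

/-- A solvable Engel subalgebra of a Killing Lie algebra is abelian. -/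
theorem isLieAbelian_engel {x : L} (hs : IsSolvable (LieSubalgebra.engel ℂ x)) :
    IsLieAbelian (LieSubalgebra.engel ℂ x) := by
  refine ⟨fun u v => Subtype.ext ?_⟩
  refine eq_zero_of_killing_orthogonal_engel (x := x) ⁅u, v⁆.2 fun e he => ?_
  exact (LinearMap.isNilpotent_trace_of_isNilpotent
    (isNilpotent_toEnd_lie_mul (M := L) u v ⟨e, he⟩)).eq_zero

theorem isCartanSubalgebra_engel {x : L} (hs : IsSolvable (LieSubalgebra.engel ℂ x)) :
    (LieSubalgebra.engel ℂ x).IsCartanSubalgebra := by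
  have := isLieAbelian_engel hs
  exact ⟨inferInstance, LieSubalgebra.normalizer_engel ℂ x⟩

end

/-! ### A fixed point with solvable Engel subalgebra -/

section
open Module LieAlgebra

variable {L : Type*} [LieRing L] [LieAlgebra ℂ L]
variable {n : ℕ} {a : L →ₗ[ℂ] L}

theorem coe_ad_pow (S : LieSubalgebra ℂ L) (x y : S) (k : ℕ) :
    ((((ad ℂ S x) ^ k) y : S) : L) = ((ad ℂ L (x : L)) ^ k) (y : L) := by
  induction k with
  | zero => rfl
  | succ k ih => rw [pow_succ', pow_succ', Module.End.mul_apply, Module.End.mul_apply, ← ih]; rfl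

namespace FiniteOrderAut

theorem ad_pow_map (h : FiniteOrderAut n a) {x : L} (hx : a x = x) (k : ℕ) (v : L) :
    ((ad ℂ L x) ^ k) (a v) = a (((ad ℂ L x) ^ k) v) := by
  induction k generalizing v with
  | zero => rfl
  | succ k ih =>
    rw [pow_succ, Module.End.mul_apply, Module.End.mul_apply, ← ih, ad_apply, ad_apply, h.map_lie,
      hx]

theorem map_mem_engel (h : FiniteOrderAut n a) {x : L} (hx : a x = x) {v : L}
    (hv : v ∈ LieSubalgebra.engel ℂ x) : a v ∈ LieSubalgebra.engel ℂ x := by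
  obtain ⟨k, hk⟩ := (LieSubalgebra.mem_engel_iff ℂ x v).mp hv
  exact (LieSubalgebra.mem_engel_iff ℂ x _).mpr ⟨k, by rw [h.ad_pow_map hx, hk, map_zero]⟩

/-- The restriction of a finite-order automorphism to the Engel subalgebra of a fixed point. -/
theorem restrict_engel (h : FiniteOrderAut n a) {x : L} (hx : a x = x) :
    FiniteOrderAut n (L := LieSubalgebra.engel ℂ x)
      (a.restrict (p := (LieSubalgebra.engel ℂ x).toSubmodule) fun _ hv => h.map_mem_engel hx hv) where
  pos := h.pos
  map_lie u v := Subtype.ext (h.map_lie u v)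
  pow_eq := by
    rw [Module.End.pow_restrict]
    refine LinearMap.ext fun v => Subtype.ext ?_
    change (a ^ n) v = v
    rw [h.pow_eq]; rfl

/-- Some fixed point has a solvable Engel subalgebra: take an element of a Cartan
subalgebra of the fixed point algebra whose Engel subalgebra is minimal. -/
theorem exists_fixed_isSolvable_engel [FiniteDimensional ℂ L] (h : FiniteOrderAut n a) :
    ∃ x : L, a x = x ∧ IsSolvable (LieSubalgebra.engel ℂ x) := by
  obtain ⟨y, hy⟩ := LieAlgebra.exists_isCartanSubalgebra_engel ℂ h.fixed
  have hCnil : LieRing.IsNilpotent (LieSubalgebra.engel ℂ y) := hy.nilpotent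
  set C := LieSubalgebra.engel ℂ y with hC
  let U : LieSubalgebra ℂ L := C.map h.fixed.incl
  have hU : ∀ z ∈ U, U ≤ LieSubalgebra.engel ℂ z := by
    rintro _ ⟨c, hc, rfl⟩ _ ⟨d, hd, rfl⟩
    obtain ⟨k, hk⟩ := (LieAlgebra.isNilpotent_iff_forall (R := ℂ)).mp hCnil ⟨c, hc⟩
    refine (LieSubalgebra.mem_engel_iff ℂ _ _).mpr ⟨k, ?_⟩
    have h1 := coe_ad_pow C ⟨c, hc⟩ ⟨d, hd⟩ k
    have h2 := coe_ad_pow h.fixed c d k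
    rw [hk] at h1
    change ((ad ℂ L (c : L)) ^ k) (d : L) = 0
    rw [← h2, ← h1]; rfl
  have hUfix : ∀ z ∈ U, a z = z := by
    rintro _ ⟨c, _, rfl⟩
    exact c.2
  obtain ⟨x, hxU, hmin⟩ := WellFounded.has_min
    (measure fun x : L => finrank ℂ (LieSubalgebra.engel ℂ x)).wf (U : Set L) ⟨0, U.zero_mem⟩
  have hbot : ∀ z ∈ U, LieSubalgebra.engel ℂ x ≤ LieSubalgebra.engel ℂ z := by
    let E : {LieSubalgebra.engel ℂ x | x ∈ U} := ⟨LieSubalgebra.engel ℂ x, x, hxU, rfl⟩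
    have hE : IsBot E := by
      refine LieAlgebra.engel_isBot_of_isMin ?_ U E (hU x hxU) ?_
      · exact Cardinal.natCast_le_aleph0.trans (Cardinal.aleph0_le_mk ℂ)
      · rintro ⟨_, z, hz, rfl⟩ hle
        have hle' : LieSubalgebra.engel ℂ z ≤ LieSubalgebra.engel ℂ x := hle
        have : (LieSubalgebra.engel ℂ z).toSubmodule = (LieSubalgebra.engel ℂ x).toSubmodule :=
          Submodule.eq_of_le_of_finrank_le hle' (not_lt.mp (hmin z hz))
        exact this.ge
    exact fun z hz => hE ⟨LieSubalgebra.engel ℂ z, z, hz, rfl⟩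
  refine ⟨x, hUfix x hxU, (h.restrict_engel (hUfix x hxU)).isSolvable_of_fixed_nilpotent ?_⟩
  rintro ⟨w, hwE⟩ hw
  have hwfix : a w = w := congrArg Subtype.val hw
  have hwU : w ∈ U := by
    have hyU : (y : L) ∈ U := ⟨y, LieSubalgebra.self_mem_engel ℂ y, rfl⟩
    obtain ⟨k, hk⟩ := (LieSubalgebra.mem_engel_iff ℂ _ _).mp (hbot _ hyU hwE)
    refine ⟨⟨w, hwfix⟩, (LieSubalgebra.mem_engel_iff ℂ _ _).mpr ⟨k, Subtype.ext ?_⟩, rfl⟩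
    rw [coe_ad_pow]
    exact hk
  rw [Module.End.isNilpotent_iff_of_finite]
  intro v
  obtain ⟨k, hk⟩ := (LieSubalgebra.mem_engel_iff ℂ _ _).mp (hbot w hwU v.2)
  exact ⟨k, Subtype.ext (by rw [coe_ad_pow]; exact hk)⟩

end FiniteOrderAut
end

/-! ### Fixed spaces of finite-order maps permuting a root system -/

section
open Module LieAlgebra

variable {V : Type*} [AddCommGroup V] [Module ℂ V] [FiniteDimensional ℂ V]

theorem finrank_eigenspace_one_eq_trace {n : ℕ} {b : V →ₗ[ℂ] V} (hn : 0 < n) (hb : b ^ n = 1) :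
    (finrank ℂ (Module.End.eigenspace b 1) : ℂ) = LinearMap.trace ℂ V (cyclicMean n b) := by
  have hp : LinearMap.IsProj (Module.End.eigenspace b 1) (cyclicMean n b) := by
    refine ⟨fun x => ?_, fun x hx => ?_⟩
    · rw [Module.End.mem_eigenspace_iff, one_smul]
      exact map_cyclicMean hb x
    · rw [Module.End.mem_eigenspace_iff, one_smul] at hx
      exact cyclicMean_of_fixed hn hx
  exact hp.trace.symm

theorem dualMap_pow (b : V →ₗ[ℂ] V) (k : ℕ) : b.dualMap ^ k = (b ^ k).dualMap := by
  induction k with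
  | zero => rfl
  | succ k ih => rw [pow_succ, pow_succ', ih]; rfl

theorem finrank_eigenspace_dualMap {n : ℕ} {b : V →ₗ[ℂ] V} (hn : 0 < n) (hb : b ^ n = 1) :
    finrank ℂ (Module.End.eigenspace b.dualMap 1) = finrank ℂ (Module.End.eigenspace b 1) := by
  have hb' : b.dualMap ^ n = 1 := by rw [dualMap_pow, hb]; rfl
  have h : (finrank ℂ (Module.End.eigenspace b.dualMap 1) : ℂ) =
      finrank ℂ (Module.End.eigenspace b 1) := by
    rw [finrank_eigenspace_one_eq_trace hn hb, finrank_eigenspace_one_eq_trace hn hb']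
    simp only [cyclicMean, map_smul, map_sum]
    congr 1
    refine Finset.sum_congr rfl fun k _ => ?_
    rw [dualMap_pow]
    exact LinearMap.trace_transpose' _
  exact_mod_cast h

/-- A finite-order linear map permuting a basis has a fixed space of dimension at least
`dim V / n`: the trace of each of its powers is a natural number. -/
theorem finrank_le_of_permutes_basis {n : ℕ} {T : V →ₗ[ℂ] V} (hn : 0 < n) (hT : T ^ n = 1)
    {ι : Type*} [Finite ι] (b : Basis ι ℂ V) (hb : ∀ i, ∃ j, T (b i) = b j) :
    finrank ℂ V ≤ n * finrank ℂ (Module.End.eigenspace T 1) := by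
  classical
  have : Fintype ι := Fintype.ofFinite ι
  have hpow : ∀ (k : ℕ) i, ∃ j, (T ^ k) (b i) = b j := by
    intro k
    induction k with
    | zero => exact fun i => ⟨i, rfl⟩
    | succ k ih =>
      intro i
      obtain ⟨j, hj⟩ := ih i
      obtain ⟨l, hl⟩ := hb j
      exact ⟨l, by rw [pow_succ', Module.End.mul_apply, hj, hl]⟩
  choose σ hσ using hpow
  have htr : ∀ k, LinearMap.trace ℂ V (T ^ k) = ((∑ i, if σ k i = i then 1 else 0 : ℕ) : ℂ) := by
    intro k
    rw [LinearMap.trace_eq_matrix_trace ℂ b, Matrix.trace]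
    simp [LinearMap.toMatrix_apply, hσ, Finsupp.single_apply]
  have h0 : ((∑ i, if σ 0 i = i then 1 else 0 : ℕ) : ℂ) = finrank ℂ V := by
    rw [← htr, pow_zero, LinearMap.trace_one]
  have hsum : ((n * finrank ℂ (Module.End.eigenspace T 1) : ℕ) : ℂ) =
      ((∑ k ∈ Finset.range n, ∑ i, if σ k i = i then 1 else 0 : ℕ) : ℂ) := by
    have hn' : (n : ℂ) ≠ 0 := by exact_mod_cast hn.ne'
    rw [Nat.cast_mul, finrank_eigenspace_one_eq_trace hn hT, Nat.cast_sum]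
    simp only [cyclicMean, map_smul, map_sum, htr, smul_eq_mul]
    rw [mul_inv_cancel_left₀ hn']
  have hsum' : n * finrank ℂ (Module.End.eigenspace T 1) =
      ∑ k ∈ Finset.range n, ∑ i, if σ k i = i then 1 else 0 := by exact_mod_cast hsum
  have h0' : (∑ i, if σ 0 i = i then 1 else 0) = finrank ℂ V := by exact_mod_cast h0
  rw [hsum', ← h0']
  exact Finset.single_le_sum (f := fun k => ∑ i, if σ k i = i then 1 else 0)
    (fun _ _ => Nat.zero_le _) (Finset.mem_range.mpr hn)

/-- A finite-order linear map that permutes the roots and preserves an additive functional `F` not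
vanishing on roots permutes the simple roots for the order given by `F`, so it has a large fixed
space. -/
theorem finrank_le_of_permutes_roots {ι N : Type*} [Finite ι] [AddCommGroup N] [Module ℂ N]
    (P : RootPairing ι ℂ V N) [P.IsRootSystem] [P.IsCrystallographic]
    {n : ℕ} {T : V →ₗ[ℂ] V} (hn : 0 < n) (hT : T ^ n = 1)
    (hroot : ∀ i, ∃ j, T (P.root i) = P.root j) (F : V →+ ℚ) (hF : ∀ i, F (P.root i) ≠ 0)
    (hFT : ∀ v, F (T v) = F v) :
    finrank ℂ V ≤ n * finrank ℂ (Module.End.eigenspace T 1) := by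
  let _i := P.indexNeg
  have hli := P.linearIndepOn_root_baseOf F hF
  have hsp : ⊤ ≤ Submodule.span ℂ (Set.range fun i : IsAddIndecomposable.baseOf P.root F =>
      P.root i) := by
    rw [← RootPairing.IsRootSystem.span_root_eq_top (P := P), Submodule.span_le]
    rintro - ⟨i, rfl⟩
    have hcl : ∀ v ∈ AddSubmonoid.closure (P.root '' IsAddIndecomposable.baseOf P.root F),
        v ∈ Submodule.span ℂ (Set.range fun i : IsAddIndecomposable.baseOf P.root F =>
          P.root i) := by
      intro v hv
      induction hv using AddSubmonoid.closure_induction with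
      | mem v hv => obtain ⟨j, hj, rfl⟩ := hv; exact Submodule.subset_span ⟨⟨j, hj⟩, rfl⟩
      | zero => exact zero_mem _
      | add v w _ _ hv hw => exact add_mem hv hw
    rcases IsAddIndecomposable.mem_or_neg_mem_closure_baseOf P.root F i (hF i) (by simp) with h | h
    · exact hcl _ h
    · exact neg_mem_iff.mp (hcl _ h)
  let b : Basis (IsAddIndecomposable.baseOf P.root F) ℂ V := Basis.mk hli hsp
  have hpow : ∀ (k : ℕ) i, ∃ j, (T ^ k) (P.root i) = P.root j := by
    intro k
    induction k with
    | zero => exact fun i => ⟨i, rfl⟩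
    | succ k ih =>
      intro i
      obtain ⟨j, hj⟩ := ih i
      obtain ⟨l, hl⟩ := hroot j
      exact ⟨l, by rw [pow_succ', Module.End.mul_apply, hj, hl]⟩
  have hFpow : ∀ (k : ℕ) v, F ((T ^ k) v) = F v := by
    intro k
    induction k with
    | zero => exact fun v => rfl
    | succ k ih => exact fun v => by rw [pow_succ', Module.End.mul_apply, hFT, ih]
  have hinv : ∀ v, (T ^ (n - 1)) (T v) = v := fun v => by
    rw [← Module.End.mul_apply, ← pow_succ, Nat.sub_add_cancel hn, hT, Module.End.one_apply]
  refine finrank_le_of_permutes_basis hn hT b ?_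
  rintro ⟨i, hi, hind⟩
  obtain ⟨j, hj⟩ := hroot i
  have hjmem : j ∈ IsAddIndecomposable.baseOf P.root F := by
    refine ⟨?_, fun k hk l hl hkl => ?_⟩
    · change 0 < F (P.root j)
      rw [← hj, hFT]
      exact hi
    -- A decomposition of the image root pulls back along the inverse `T ^ (n - 1)`.
    obtain ⟨k', hk'⟩ := hpow (n - 1) k
    obtain ⟨l', hl'⟩ := hpow (n - 1) l
    have hk0 : 0 < F (P.root k') := by rw [← hk', hFpow]; exact hk
    have hl0 : 0 < F (P.root l') := by rw [← hl', hFpow]; exact hl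
    rcases hind k' hk0 l' hl0 (by rw [← hk', ← hl', ← map_add, ← hkl, ← hj, hinv]) with h | h
    · exact absurd h (P.ne_zero k')
    · exact absurd h (P.ne_zero l')
  refine ⟨⟨j, hjmem⟩, ?_⟩
  rw [show b ⟨i, hi, hind⟩ = P.root i from Basis.mk_apply hli hsp _]
  exact hj.trans (Basis.mk_apply hli hsp ⟨j, hjmem⟩).symm

end

/-! ### The rank bound -/

section
open Module LieAlgebra

variable {L : Type*} [LieRing L] [LieAlgebra ℂ L] [FiniteDimensional ℂ L] [IsKilling ℂ L]
variable {n : ℕ} {a : L →ₗ[ℂ] L}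

/-- No root vanishes on `x` if the Cartan subalgebra is the Engel subalgebra of `x`. -/
theorem root_apply_ne_zero {x : L} {H : LieSubalgebra ℂ L} [H.IsCartanSubalgebra]
    (hH : H = LieSubalgebra.engel ℂ x) (hxH : x ∈ H) (β : LieModule.Weight ℂ H L)
    (hβ : β.IsNonZero) : β ⟨x, hxH⟩ ≠ 0 := by
  intro h0
  obtain ⟨v, hv, hv0⟩ := β.exists_ne_zero
  have hact : ∀ y : H, ⁅(y : L), v⁆ = β y • v := fun y =>
    IsKilling.lie_eq_smul_of_mem_rootSpace hv y
  have hvH : v ∈ H := by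
    rw [hH]
    refine (LieSubalgebra.mem_engel_iff ℂ x v).mpr ⟨1, ?_⟩
    rw [pow_one, ad_apply, hact ⟨x, hxH⟩, h0, zero_smul]
  refine hβ (funext fun y => ?_)
  have h1 : ⁅y, (⟨v, hvH⟩ : H)⁆ = 0 := trivial_lie_zero H H _ _
  have h2 : β y • v = 0 := by rw [← hact]; exact congrArg Subtype.val h1
  exact (smul_eq_zero.mp h2).resolve_right hv0

/-- The rank of a Killing Lie algebra is bounded in terms of the order of an automorphism and the
dimension of its fixed point algebra. -/
theorem FiniteOrderAut.finrank_engel_le (h : FiniteOrderAut n a) {x : L} (hx : a x = x)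
    (hs : IsSolvable (LieSubalgebra.engel ℂ x)) :
    finrank ℂ (LieSubalgebra.engel ℂ x) ≤ n * finrank ℂ (Module.End.eigenspace a 1) := by
  have hcart := isCartanSubalgebra_engel hs
  obtain ⟨H, hH⟩ : ∃ H, H = LieSubalgebra.engel ℂ x := ⟨_, rfl⟩
  rw [← hH] at hcart ⊢
  have hxH : x ∈ H := by rw [hH]; exact LieSubalgebra.self_mem_engel ℂ x
  have hstab : ∀ v ∈ H.toSubmodule, a v ∈ H.toSubmodule := by
    intro v hv
    rw [hH] at hv ⊢
    exact h.map_mem_engel hx hv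
  let A : H →ₗ[ℂ] H := a.restrict hstab
  have hA : A ^ n = 1 := by
    rw [Module.End.pow_restrict]
    refine LinearMap.ext fun v => Subtype.ext ?_
    change (a ^ n) v = v
    rw [h.pow_eq]; rfl
  have hAle : finrank ℂ (Module.End.eigenspace A 1) ≤ finrank ℂ (Module.End.eigenspace a 1) := by
    let ι : Module.End.eigenspace A 1 →ₗ[ℂ] Module.End.eigenspace a 1 :=
      (H.toSubmodule.subtype ∘ₗ (Module.End.eigenspace A 1).subtype).codRestrict _ fun v => by
        have hv := Module.End.mem_eigenspace_iff.mp v.2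
        exact Module.End.mem_eigenspace_iff.mpr (congrArg Subtype.val hv)
    refine LinearMap.finrank_le_finrank_of_injective (f := ι) fun u v huv => ?_
    exact Subtype.ext (Subtype.ext (show ((ι u : Module.End.eigenspace a 1) : L) = ι v by rw [huv]))
  have hdual : A.dualMap ^ n = 1 := by rw [dualMap_pow, hA]; rfl
  have hAsurj : Function.Surjective A := fun v => by
    refine ⟨(A ^ (n - 1)) v, ?_⟩
    rw [← Module.End.mul_apply, ← pow_succ', Nat.sub_add_cancel h.pos, hA, Module.End.one_apply]
  have hroot : ∀ i, ∃ j, A.dualMap ((IsKilling.rootSystem H).root i) =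
      (IsKilling.rootSystem H).root j := by
    rintro ⟨β, hβ⟩
    have hβ0 : β.IsNonZero := by simpa using hβ
    obtain ⟨v, hv, hv0⟩ := β.exists_ne_zero
    obtain ⟨w, rfl⟩ := h.surjective v
    have hw0 : w ≠ 0 := fun h0 => hv0 (by rw [h0, map_zero])
    -- The preimage `w` of a root vector for `β` is a root vector for `β ∘ A`.
    have hw : w ∈ LieModule.genWeightSpace L (fun y : H => β (A y)) := by
      refine LieModule.weightSpace_le_genWeightSpace L _ ?_
      rw [LieModule.mem_weightSpace]
      intro y
      refine h.injective ?_
      rw [map_smul]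
      change a ⁅(y : L), w⁆ = _
      rw [h.map_lie]
      exact IsKilling.lie_eq_smul_of_mem_rootSpace hv (A y)
    let γ : LieModule.Weight ℂ H L := ⟨fun y => β (A y), fun hbot => by
      rw [hbot, LieSubmodule.mem_bot] at hw; exact hw0 hw⟩
    have hγ : γ.IsNonZero := by
      intro h0
      refine hβ0 (funext fun y => ?_)
      obtain ⟨z, rfl⟩ := hAsurj y
      exact congrFun h0 z
    exact ⟨⟨γ, by simpa using hγ⟩, LinearMap.ext fun y => rfl⟩
  obtain ⟨f, hf⟩ := Module.exists_dual_forall_apply_ne_zero (K := ℚ) (M := ℂ)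
    (fun i : H.root => (IsKilling.rootSystem H).root i ⟨x, hxH⟩) fun i =>
      root_apply_ne_zero hH hxH i.1 (by obtain ⟨i, hi⟩ := i; simpa using hi)
  let F : Dual ℂ H →+ ℚ := f.toAddMonoidHom.comp
    ((Dual.eval ℂ H ⟨x, hxH⟩ : Dual ℂ H →ₗ[ℂ] ℂ).toAddMonoidHom)
  have hAx : A ⟨x, hxH⟩ = ⟨x, hxH⟩ := Subtype.ext hx
  have key := finrank_le_of_permutes_roots (IsKilling.rootSystem H) h.pos hdual hroot F
    (fun i => hf i) (fun v => by
      change f (v (A ⟨x, hxH⟩)) = f (v ⟨x, hxH⟩)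
      rw [hAx])
  rw [finrank_eigenspace_dualMap h.pos hA, Subspace.dual_finrank_eq] at key
  exact key.trans (Nat.mul_le_mul_left n hAle)

end

/-! ### Counting roots -/

section
open Module LieAlgebra

open TensorProduct

/-- The vector `(γᵛ ⊗ γᵛ ⊗ γᵛ, γᵛ)` attached to a root `γ` with coroot `γᵛ`. -/
noncomputable def corootCube {ι M N : Type*} [AddCommGroup M] [Module ℂ M] [AddCommGroup N]
    [Module ℂ N] (P : RootPairing ι ℂ M N) (i : ι) : (N ⊗[ℂ] N ⊗[ℂ] N) × N :=
  (P.coroot i ⊗ₜ P.coroot i ⊗ₜ P.coroot i, P.coroot i)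

/-- The functional sending the vector of `γ` to `⟨β, γᵛ⟩ ^ 3 - ⟨β, γᵛ⟩`. -/
noncomputable def cubeFunctional {ι M N : Type*} [AddCommGroup M] [Module ℂ M] [AddCommGroup N]
    [Module ℂ N] (P : RootPairing ι ℂ M N) (i : ι) : (N ⊗[ℂ] N ⊗[ℂ] N) × N →ₗ[ℂ] ℂ :=
  LinearMap.coprod
    (LinearMap.mul' ℂ ℂ ∘ₗ TensorProduct.map (LinearMap.mul' ℂ ℂ ∘ₗ
      TensorProduct.map (P.root' i) (P.root' i)) (P.root' i))
    (-(P.root' i))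

variable {ι M N : Type*} [AddCommGroup M] [Module ℂ M] [AddCommGroup N]
    [Module ℂ N] (P : RootPairing ι ℂ M N)

theorem cubeFunctional_corootCube [P.IsCrystallographic] (i j : ι) :
    cubeFunctional P i (corootCube P j) =
      ((P.pairingIn ℤ i j ^ 3 - P.pairingIn ℤ i j : ℤ) : ℂ) := by
  have h : P.root' i (P.coroot j) = ((P.pairingIn ℤ i j : ℤ) : ℂ) := by
    rw [RootPairing.root'_coroot_eq_pairing, ← P.algebraMap_pairingIn ℤ]; rfl
  simp [cubeFunctional, corootCube, h]
  ring

/-- The vectors `(γᵛ ⊗ γᵛ ⊗ γᵛ, γᵛ)` are linearly independent as `γ` ranges over a set of roots with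
no opposite pairs. In a relation, look at a shortest root `β` with nonzero coefficient: as
`⟨β, γᵛ⟩` is `0` or `±1` for the other `γ` of at least that length, the functional attached
to `β` kills their vectors, while its value at the vector of `β` is `2 ^ 3 - 2 = 6`. -/
theorem linearIndependent_corootCube [Finite ι] [P.IsCrystallographic] [P.IsReduced] (S : Set ι)
    (hS : ∀ i ∈ S, ∀ j ∈ S, P.root i ≠ -P.root j) :
    LinearIndependent ℂ fun i : S => corootCube P i := by
  classical
  have : Fintype ι := Fintype.ofFinite ι
  have : Fintype S := Fintype.ofFinite S
  rw [Fintype.linearIndependent_iff]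
  intro c hc
  by_contra! hne
  obtain ⟨i, hi, hmin⟩ := WellFounded.has_min
    (measure fun i : S => ((P.posRootForm ℤ).rootLength i).toNat).wf {i | c i ≠ 0} hne
  have h0 := congrArg (cubeFunctional P i) hc
  rw [map_sum, map_zero, Finset.sum_eq_single i] at h0
  · rw [map_smul, cubeFunctional_corootCube, RootPairing.pairingIn_same, smul_eq_mul] at h0
    norm_num at h0
    exact hi h0
  · intro j _ hji
    rw [map_smul]
    by_cases hj : c j = 0
    · rw [hj, zero_smul]
    have hp : P.pairingIn ℤ i j ∈ ({-1, 0, 1} : Set ℤ) := by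
      by_contra hnot
      have hlt := (P.posRootForm ℤ).rootLength_lt_of_pairingIn_notMem
        (fun h => hji (Subtype.ext (P.root.injective h)).symm) (hS i i.2 j j.2) hnot
      have hpos := (P.posRootForm ℤ).rootLength_pos j
      have hm : ¬ ((P.posRootForm ℤ).rootLength j).toNat < ((P.posRootForm ℤ).rootLength i).toNat :=
        hmin j hj
      omega
    rw [cubeFunctional_corootCube]
    rcases hp with hp | hp | hp <;> rw [hp] <;> norm_num
  · intro h; exact absurd (Finset.mem_univ _) h

/-- A crude bound on the number of roots of a reduced crystallographic root system in terms of its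
rank. -/
theorem card_roots_le [Finite ι] [FiniteDimensional ℂ N] [P.IsCrystallographic] [P.IsReduced] :
    Nat.card ι ≤ 2 * (finrank ℂ N ^ 3 + finrank ℂ N) := by
  classical
  let _i := P.indexNeg
  have : Fintype ι := Fintype.ofFinite ι
  let e := Fintype.equivFin ι
  -- One representative of every pair of opposite roots.
  let S : Set ι := {i | e i < e (-i)}
  have hneg : ∀ i j, P.root i = -P.root j → i = -j := fun i j h =>
    P.root.injective (by rw [h]; simp)
  have hli := linearIndependent_corootCube P S (by
    intro i hi j hj h
    have hij := hneg i j h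
    subst hij
    have hi' : e (-j) < e (- -j) := hi
    rw [neg_neg] at hi'
    exact lt_asymm hi' hj)
  have hcard : Nat.card S ≤ finrank ℂ N ^ 3 + finrank ℂ N := by
    have : Fintype S := Fintype.ofFinite S
    have := hli.fintype_card_le_finrank
    rw [finrank_prod, finrank_tensorProduct, finrank_tensorProduct] at this
    rw [Nat.card_eq_fintype_card, pow_three, ← mul_assoc]
    exact this
  have hcover : (Set.univ : Set ι) ⊆ S ∪ (fun i => -i) '' S := by
    intro i _
    have hne : e i ≠ e (-i) := fun h => P.ne_neg i (e.injective h)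
    rcases lt_or_gt_of_ne hne with h | h
    · exact Or.inl h
    · exact Or.inr ⟨-i, show e (-i) < e (- -i) by rwa [neg_neg], neg_neg i⟩
  have h1 : Nat.card ι ≤ Nat.card S + Nat.card S := by
    rw [← Set.ncard_univ, ← Nat.card_coe_set_eq]
    calc Nat.card (Set.univ : Set ι) = (Set.univ : Set ι).ncard := Nat.card_coe_set_eq _
      _ ≤ (S ∪ (fun i => -i) '' S).ncard := Set.ncard_le_ncard hcover (Set.toFinite _)
      _ ≤ S.ncard + ((fun i => -i) '' S).ncard := Set.ncard_union_le _ _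
      _ ≤ S.ncard + S.ncard := by exact Nat.add_le_add_left (Set.ncard_image_le (Set.toFinite _)) _
  omega

end

/-! ### The dimension bound -/

section
open Module LieAlgebra

theorem finrank_biSup_le {V ι : Type*} [AddCommGroup V] [Module ℂ V] [FiniteDimensional ℂ V]
    (s : Finset ι) (p : ι → Submodule ℂ V) :
    finrank ℂ (⨆ i ∈ s, p i : Submodule ℂ V) ≤ ∑ i ∈ s, finrank ℂ (p i) := by
  classical
  induction s using Finset.induction_on with
  | empty => simp
  | insert i s hi ih =>
    rw [Finset.iSup_insert, Finset.sum_insert hi]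
    exact (Submodule.finrank_add_le_finrank_add_finrank _ _).trans (Nat.add_le_add_left ih _)

variable {L : Type*} [LieRing L] [LieAlgebra ℂ L] [FiniteDimensional ℂ L]
variable {n : ℕ} {a : L →ₗ[ℂ] L}

/-- Root spaces are lines, so the root space decomposition gives `dim L ≤ rank + #roots`. -/
theorem finrank_le_rank_add_card_roots [IsKilling ℂ L] (H : LieSubalgebra ℂ L)
    [H.IsCartanSubalgebra] : finrank ℂ L ≤ finrank ℂ H + Nat.card H.root := by
  have htop : (⊤ : Submodule ℂ L) ≤
      H.toSubmodule ⊔ ⨆ α ∈ H.root, (rootSpace H α).toSubmodule := by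
    have h := congrArg LieSubmodule.toSubmodule (LieModule.iSup_genWeightSpace_eq_top' ℂ H L)
    rw [LieSubmodule.iSup_toSubmodule, LieSubmodule.top_toSubmodule] at h
    rw [← h]
    refine iSup_le fun χ => ?_
    by_cases hχ : χ.IsZero
    · refine le_sup_of_le_left ?_
      have h0 : (χ : H → ℂ) = 0 := hχ
      rw [h0]
      intro v hv
      have h1 : v ∈ rootSpace H 0 := hv
      rw [rootSpace_zero_eq] at h1
      exact h1
    · exact le_sup_of_le_right (le_biSup (fun α : LieModule.Weight ℂ H L =>
        (rootSpace H α).toSubmodule) (by simpa using hχ : χ ∈ H.root))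
  have h1 := Submodule.finrank_mono htop
  rw [finrank_top] at h1
  refine h1.trans ((Submodule.finrank_add_le_finrank_add_finrank _ _).trans ?_)
  refine Nat.add_le_add_left ((finrank_biSup_le _ _).trans ?_) _
  exact (Finset.sum_le_card_nsmul _ _ 1 fun α hα =>
    (IsKilling.finrank_rootSpace_eq_one α (by simpa using hα)).le).trans
      (by rw [smul_eq_mul, mul_one]; exact (Nat.card_eq_fintype_card.trans (Fintype.card_coe _)).ge)

/-- With `r` the rank of the semisimple algebra `L`, the rank is at most `n * dim L ^ a` and
`dim L ≤ r + 2 * (r ^ 3 + r)`. -/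
theorem FiniteOrderAut.finrank_le_of_killing [IsKilling ℂ L] (h : FiniteOrderAut n a) :
    ∃ r, r ≤ n * finrank ℂ (Module.End.eigenspace a 1) ∧ finrank ℂ L ≤ 2 * r ^ 3 + 3 * r := by
  obtain ⟨x, hx, hs⟩ := h.exists_fixed_isSolvable_engel
  have := isCartanSubalgebra_engel hs
  refine ⟨_, h.finrank_engel_le hx hs, ?_⟩
  have h1 := finrank_le_rank_add_card_roots (LieSubalgebra.engel ℂ x)
  have h2 := card_roots_le (IsKilling.rootSystem (LieSubalgebra.engel ℂ x))
  omega

/-- The bound in terms of the rank `r` of the semisimple quotient: there are at most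
`2 * r ^ 3 + 2 * r` roots, and `r` is at most `n` times the dimension of the fixed points. -/
theorem FiniteOrderAut.finrank_quotient_radical_le (h : FiniteOrderAut n a) :
    ∃ r, r ≤ n * finrank ℂ (Module.End.eigenspace a 1) ∧
      finrank ℂ (L ⧸ radical ℂ L) ≤ 2 * r ^ 3 + 3 * r := by
  obtain ⟨b, hb, hab⟩ := h.quotient_radical
  have := hasTrivialRadical_quotient (L := L)
  obtain ⟨r, hr, hdim⟩ := hb.finrank_le_of_killing
  refine ⟨r, hr.trans (Nat.mul_le_mul_left n ?_), hdim⟩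
  have hle : Module.End.eigenspace b 1 ≤ (Module.End.eigenspace a 1).map
      (LieSubmodule.Quotient.mk' (radical ℂ L) : L →ₗ[ℂ] L ⧸ radical ℂ L) := by
    intro y hy
    rw [Module.End.mem_eigenspace_iff, one_smul] at hy
    obtain ⟨x, hx, rfl⟩ := h.exists_fixed_lift hab y hy
    exact ⟨x, Module.End.mem_eigenspace_iff.mpr (by rw [hx, one_smul]), rfl⟩
  exact (Submodule.finrank_mono hle).trans (Submodule.finrank_map_le _ _)

end

/-- Let `g` be a finite-dimensional Lie algebra over `ℂ` with solvable radical `r`, and let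
`α` be an automorphism of `g` of finite order `n` whose fixed-point subalgebra has
dimension `m`. Then `dim (g ⧸ r) ≤ 16 * (m * n) ^ 3 + 4 * (m * n) ^ 2 + 224 * (m * n)`. -/
theorem finrank_quotient_radical_le_bound_of_finite_order
    (g : Type*) [LieRing g] [LieAlgebra ℂ g] [FiniteDimensional ℂ g]
    (α : g ≃ₗ⁅ℂ⁆ g) (n m : ℕ) (hn : 0 < n)
    (hord : orderOf α.toLinearEquiv = n)
    (hfix : Module.finrank ℂ ↥(Module.End.eigenspace (α.toLinearEquiv : g →ₗ[ℂ] g) 1) = m) :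
    Module.finrank ℂ (g ⧸ LieAlgebra.radical ℂ g)
      ≤ 16 * (m * n) ^ 3 + 4 * (m * n) ^ 2 + 224 * (m * n) := by
  have hα : FiniteOrderAut n (α.toLinearEquiv : g →ₗ[ℂ] g) := by
    refine ⟨hn, fun x y => α.map_lie x y, ?_⟩
    have hpow : α.toLinearEquiv ^ n = 1 := by rw [← hord]; exact pow_orderOf_eq_one _
    have hk : ∀ (k : ℕ) (x : g),
        ((α.toLinearEquiv : g →ₗ[ℂ] g) ^ k) x = (α.toLinearEquiv ^ k) x := by
      intro k
      induction k with
      | zero => exact fun x => rfl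
      | succ k ih => exact fun x => by rw [pow_succ, pow_succ, Module.End.mul_apply, ih]; rfl
    refine LinearMap.ext fun x => ?_
    rw [hk, hpow]; rfl
  obtain ⟨r, hr, hdim⟩ := hα.finrank_quotient_radical_le
  rw [hfix, mul_comm] at hr
  have hr3 : r ^ 3 ≤ (m * n) ^ 3 := Nat.pow_le_pow_left hr 3
  calc Module.finrank ℂ (g ⧸ LieAlgebra.radical ℂ g) ≤ 2 * r ^ 3 + 3 * r := hdim
    _ ≤ 2 * (m * n) ^ 3 + 3 * (m * n) := by gcongr
    _ ≤ _ := by nlinarith [Nat.zero_le ((m * n) ^ 3), Nat.zero_le ((m * n) ^ 2), Nat.zero_le (m * n)]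
end

section
/- Let s be a finite-dimensional semisimple Lie algebra over ℂ of rank ρ. Then dim(s) ≤ ρ·(2ρ² + 2ρ + 112). -/
/-!
The weight space decomposition gives `dim s = ρ + |Φ|` with `Φ` the root system of `s`, so it
suffices to bound the number of roots in a (possibly reducible) reduced crystallographic root
system `Φ` of rank `d`; the bound obtained is `|Φ| ≤ 2 d² (d + 1)`.

The idea is the absolute bound of Delsarte, Goethals and Seidel for lines with few angles. Fix an
invariant form `(·,·)`, and let `S` be a set of roots in which any two nonorthogonal roots have the
same length (`card_le_of_pairing_symm`). Choose a subset `R` of `S` with no antipodal pairs and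
`|S| ≤ 2 |R|` (`exists_half`). Two distinct roots `α, β` of `R` satisfy `(α,β) = 0` or
`4 (α,β)² = (α,α) (β,β)`, so the cubic forms `f_β(x) = (β,x) ((β,x)² - (β,β) (x,x) / 4)` satisfy
`f_β(α) = 0` for `α ≠ β`, while `f_β(β) ≠ 0`. Hence they are linearly independent, and they live in
a space spanned by `d * (d + 1).choose 2` cubics (`exists_cubic_finset`).

Finally `Φ` is the union of two such sets `S`: the roots which are strictly longer than some root
nonorthogonal to them, and all the others. For the second set the required property is immediate;
for the first it says that no component of `Φ` has three root lengths (`no_three_lengths`).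
-/

open scoped Pointwise in
open Module in
/-- On a `d`-dimensional space, the cubic functions `l (l² - c q)`, with `l` a linear form, `c` a
scalar and `q` a quadratic form, all lie in the span of at most `d * (d + 1).choose 2` functions,
namely the products of a coordinate with a degree two monomial in the coordinates. -/
theorem exists_cubic_finset (K V : Type*) [Field K] [AddCommGroup V] [Module K V]
    [FiniteDimensional K V] :
    ∃ C : Finset (V → K), C.card ≤ finrank K V * (finrank K V + 1).choose 2 ∧
      ∀ (l : V →ₗ[K] K) (c : K) (A : LinearMap.BilinForm K V),
        (fun x ↦ l x * (l x * l x - c * A x x)) ∈ Submodule.span K (C : Set (V → K)) := by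
  classical
  let b := finBasis K V
  let e : Fin (finrank K V) → V → K := fun a x ↦ b.coord a x
  let q : Sym2 (Fin (finrank K V)) → V → K :=
    Sym2.lift ⟨fun a a' ↦ e a * e a', fun a a' ↦ mul_comm _ _⟩
  let C₁ : Finset (V → K) := Finset.univ.image e
  let C₂ : Finset (V → K) := Finset.univ.image q
  let W₁ : Submodule K (V → K) := Submodule.span K (Set.range e)
  let W₂ : Submodule K (V → K) := Submodule.span K (Set.range q)
  have hlin (l : V →ₗ[K] K) : (fun x ↦ l x) ∈ W₁ := by
    have : (fun x ↦ l x) = ∑ a, l (b a) • e a := by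
      ext x
      have h := congrArg l (b.sum_repr x)
      rw [map_sum] at h
      rw [← h]
      simp [e, mul_comm]
    rw [this]
    exact sum_mem fun a _ ↦ Submodule.smul_mem _ _ (Submodule.subset_span ⟨a, rfl⟩)
  have hW : W₁ * W₁ ≤ W₂ := by
    rw [Submodule.span_mul_span, Submodule.span_le]
    rintro _ ⟨_, ⟨a, rfl⟩, _, ⟨a', rfl⟩, rfl⟩
    exact Submodule.subset_span ⟨s(a, a'), rfl⟩
  have hquad (A : LinearMap.BilinForm K V) : (fun x ↦ A x x) ∈ W₂ := by
    have : (fun x ↦ A x x) = ∑ a, e a * (fun x ↦ A (b a) x) := by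
      ext x
      have h := congrArg (fun y ↦ A y x) (b.sum_repr x)
      simp only [map_sum, LinearMap.sum_apply, map_smul, LinearMap.smul_apply, smul_eq_mul] at h
      rw [← h]
      simp [e]
    rw [this]
    exact sum_mem fun a _ ↦ hW <|
      Submodule.mul_mem_mul (Submodule.subset_span ⟨a, rfl⟩) (hlin (A (b a)))
  refine ⟨C₁ * C₂, ?_, fun l c A ↦ ?_⟩
  · refine Finset.card_mul_le.trans (Nat.mul_le_mul ?_ ?_)
    · exact Finset.card_image_le.trans (by simp)
    · exact Finset.card_image_le.trans (by rw [Finset.card_univ, Sym2.card, Fintype.card_fin])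
  · have hC : Submodule.span K ((C₁ * C₂ : Finset (V → K)) : Set (V → K)) = W₁ * W₂ := by
      simp only [W₁, W₂, C₁, C₂, Submodule.span_mul_span, Finset.coe_mul, Finset.coe_image,
        Finset.coe_univ, Set.image_univ]
    rw [hC]
    exact Submodule.mul_mem_mul (hlin l) <| sub_mem
      (hW (Submodule.mul_mem_mul (hlin l) (hlin l))) (Submodule.smul_mem _ c (hquad A))

namespace RootPairing

open Module

variable {ι K V N : Type*} [Field K] [CharZero K] [AddCommGroup V] [Module K V]
  [AddCommGroup N] [Module K N] (P : RootPairing ι K V N)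

/-- Every finite set of roots has a subset without antipodal pairs and at least half as large. -/
theorem exists_half (S : Finset ι) : ∃ R ⊆ S, S.card ≤ 2 * R.card ∧
    ∀ i ∈ R, ∀ j ∈ R, P.root i ≠ -P.root j := by
  classical
  -- An antipode-free subset of maximal cardinality works: together with its negative it covers `S`.
  obtain ⟨R, hR, hmax⟩ := Finset.exists_max_image
    (S.powerset.filter fun R ↦ ∀ i ∈ R, ∀ j ∈ R, P.root i ≠ -P.root j) Finset.card
    ⟨∅, by simp⟩
  simp only [Finset.mem_filter, Finset.mem_powerset] at hR hmax
  refine ⟨R, hR.1, ?_, hR.2⟩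
  have hsub : S ⊆ R ∪ R.image (fun i ↦ P.reflectionPerm i i) := by
    intro i hi
    by_contra! hcon
    simp only [Finset.mem_union, Finset.mem_image, not_or, not_exists, not_and] at hcon
    have hne : ∀ j ∈ R, P.root i ≠ -P.root j := fun j hj h ↦
      hcon.2 j hj (P.root.injective (by simp [root_reflectionPerm, h]))
    have hself : P.root i ≠ -P.root i := fun h ↦ P.ne_zero i (by
      have : (2 : K) • P.root i = 0 := by rw [two_smul]; nth_rw 1 [h]; simp
      simpa using this)
    have := hmax (insert i R) ⟨Finset.insert_subset hi hR.1, fun j hj k hk ↦ by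
      rcases Finset.mem_insert.1 hj with hji | hj <;> rcases Finset.mem_insert.1 hk with hki | hk
      · rwa [hji, hki]
      · rw [hji]
        exact hne k hk
      · rw [hki]
        exact fun h ↦ hne j hj (by rw [h, neg_neg])
      · exact hR.2 j hj k hk⟩
    rw [Finset.card_insert_of_notMem hcon.1] at this
    omega
  have h₁ := Finset.card_le_card hsub
  have h₂ := Finset.card_union_le R (R.image (fun i ↦ P.reflectionPerm i i))
  have h₃ := Finset.card_image_le (s := R) (f := fun i ↦ P.reflectionPerm i i)
  omega

variable [Finite ι] [P.IsCrystallographic] [P.IsReduced]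

/-- A set of roots in which nonorthogonal roots have equal length (expressed by the symmetry of the
pairing on the set) is at most twice as large as the dimension bound for the cubics `l (l² - c q)`.
-/
theorem card_le_of_pairing_symm [FiniteDimensional K V] (S : Finset ι)
    (hS : ∀ i ∈ S, ∀ j ∈ S, P.pairingIn ℤ i j = P.pairingIn ℤ j i) :
    S.card ≤ 2 * (finrank K V * (finrank K V + 1).choose 2) := by
  classical
  have := Fintype.ofFinite ι
  obtain ⟨R, hRS, hcard, hR⟩ := P.exists_half S
  obtain ⟨C, hC, hmem⟩ := exists_cubic_finset K V
  refine hcard.trans (Nat.mul_le_mul le_rfl (le_trans ?_ hC))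
  let B := P.toInvariantForm
  -- The constant `1 / 4` is the squared cosine of the angle between distinct nonorthogonal lines.
  let f : R → V → K := fun j x ↦ B.form (P.root j) x *
    (B.form (P.root j) x * B.form (P.root j) x - (B.form (P.root j) (P.root j) / 4) * B.form x x)
  have hdiag (i : R) : f i (P.root i) ≠ 0 := by
    have h0 := B.ne_zero i
    have : f i (P.root i) = 3 / 4 * B.form (P.root i) (P.root i) ^ 3 := by simp only [f]; ring
    rw [this]
    exact mul_ne_zero (by norm_num) (pow_ne_zero _ h0)
  have hoff (i j : R) (hij : i ≠ j) : f j (P.root i) = 0 := by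
    have h₁ : 2 * B.form (P.root i) (P.root j) = _ := B.two_mul_apply_root_root i j
    have h₂ : 2 * B.form (P.root j) (P.root i) = _ := B.two_mul_apply_root_root j i
    have h₃ : B.form (P.root i) (P.root j) = B.form (P.root j) (P.root i) := B.symm.eq _ _
    have hset := P.pairingIn_pairingIn_mem_set_of_isCrystal_of_isRed'
      (i := i) (j := j) (fun h ↦ hij (Subtype.ext (P.root.injective h))) (hR i i.2 j j.2)
    have hsymm := hS i (hRS i.2) j (hRS j.2)
    rw [← P.algebraMap_pairingIn ℤ] at h₁ h₂
    simp only [Set.mem_insert_iff, Set.mem_singleton_iff, Prod.mk.injEq] at hset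
    have hcase : P.pairingIn ℤ i j = 0 ∧ P.pairingIn ℤ j i = 0 ∨
        P.pairingIn ℤ i j = 1 ∧ P.pairingIn ℤ j i = 1 ∨
        P.pairingIn ℤ i j = -1 ∧ P.pairingIn ℤ j i = -1 := by omega
    simp only [f]
    rw [h₃] at h₁
    generalize B.form (P.root j) (P.root i) = x at h₁ h₂ ⊢
    generalize B.form (P.root i) (P.root i) = y at h₂ ⊢
    generalize B.form (P.root j) (P.root j) = z at h₁ ⊢
    rcases hcase with ⟨ha, hb⟩ | ⟨ha, hb⟩ | ⟨ha, hb⟩ <;> rw [ha] at h₁ <;> rw [hb] at h₂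
    · have : x = 0 := by simpa using h₁
      simp [this]
    · have hz : z = 2 * x := by simpa using h₁.symm
      have hy : y = 2 * x := by simpa using h₂.symm
      rw [hy, hz]
      ring
    · have hz : z = -(2 * x) := by rw [h₁]; simp
      have hy : y = -(2 * x) := by rw [h₂]; simp
      rw [hy, hz]
      ring
  have hli : LinearIndependent K f := by
    rw [Fintype.linearIndependent_iff]
    intro g hg i
    have := congrFun hg (P.root i)
    simp only [Finset.sum_apply, Pi.smul_apply, smul_eq_mul, Pi.zero_apply] at this
    rw [Finset.sum_eq_single i (fun j _ hj ↦ by rw [hoff i j hj.symm, mul_zero]) (by simp)] at this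
    exact (mul_eq_zero.1 this).resolve_right (hdiag i)
  have := linearIndependent_le_span_aux' f hli (C : Set (V → K))
    (Set.range_subset_iff.2 fun j ↦ hmem (B.form (P.root j)) _ B.form)
  simpa using this

variable {P} in
/-- For nonorthogonal roots, the ratio of the squared lengths is the ratio of the absolute values of
the two pairings, and there are only a few possibilities for the latter. -/
theorem InvariantForm.length_ratio (B : P.InvariantForm) {i j : ι} (h : P.pairingIn ℤ i j ≠ 0) :
    ∃ m n : ℤ, B.form (P.root i) (P.root i) * n = B.form (P.root j) (P.root j) * m ∧
      m = |P.pairingIn ℤ i j| ∧ n = |P.pairingIn ℤ j i| ∧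
      ((m, n) = (1, 1) ∨ (m, n) = (2, 2) ∨ (m, n) = (1, 2) ∨ (m, n) = (2, 1) ∨ (m, n) = (1, 3) ∨
        (m, n) = (3, 1)) := by
  have hB := B.pairing_mul_eq_pairing_mul_swap i j
  have hset := P.pairingIn_pairingIn_mem_set_of_isCrystal_of_isRed i j
  simp only [← P.algebraMap_pairingIn ℤ] at hB
  simp only [Set.mem_insert_iff, Set.mem_singleton_iff, Prod.mk.injEq] at hset
  refine ⟨_, _, ?_, rfl, rfl, ?_⟩
  · generalize P.pairingIn ℤ i j = a at *
    generalize P.pairingIn ℤ j i = b at *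
    rcases hset with h | h | h | h | h | h | h | h | h | h | h | h | h <;>
      obtain ⟨rfl, rfl⟩ := h <;> simp at hB ⊢ <;> grind
  · rcases hset with hv | hv | hv | hv | hv | hv | hv | hv | hv | hv | hv | hv | hv <;>
      rw [hv.1, hv.2] <;> simp
    exact h hv.1

/-- There is no chain of consecutively nonorthogonal roots `i`, `j`, `k` of strictly decreasing
length. Otherwise the ratio of the squared lengths of `i` and `k` would be `4`, `6` or `9`; but some
root as long as `i`, either `i` itself or its reflection in `j`, is not orthogonal to `k`, so that
this ratio lies in `{1, 2, 3, 1 / 2, 1 / 3}`. -/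
theorem no_three_lengths {i j k : ι}
    (hij : |P.pairingIn ℤ j i| < |P.pairingIn ℤ i j|)
    (hjk : |P.pairingIn ℤ k j| < |P.pairingIn ℤ j k|) : False := by
  have := Fintype.ofFinite ι
  let B := P.toInvariantForm
  have hij0 : P.pairingIn ℤ i j ≠ 0 := fun h ↦ by
    rw [h, abs_zero] at hij; exact (abs_nonneg _).not_gt hij
  have hjk0 : P.pairingIn ℤ j k ≠ 0 := fun h ↦ by
    rw [h, abs_zero] at hjk; exact (abs_nonneg _).not_gt hjk
  obtain ⟨i', hi', hi'k⟩ : ∃ i', B.form (P.root i') (P.root i') = B.form (P.root i) (P.root i) ∧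
      P.pairingIn ℤ i' k ≠ 0 := by
    by_cases hik : P.pairingIn ℤ i k = 0
    · refine ⟨P.reflectionPerm j i, by simp [root_reflectionPerm], fun h ↦ ?_⟩
      have hZ : ∀ a b, P.pairing a b = (P.pairingIn ℤ a b : K) := fun a b ↦ by
        rw [← P.algebraMap_pairingIn ℤ]; simp
      have h₁ : P.pairing (P.reflectionPerm j i) k
          = P.pairing i k - P.pairing i j * P.pairing j k := by
        simp only [← root_coroot_eq_pairing, root_reflectionPerm, reflection_apply]
        simp
      rw [hZ, hZ, hZ, hZ, h, hik] at h₁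
      have : (P.pairingIn ℤ i j : K) * P.pairingIn ℤ j k = 0 := by simpa using h₁.symm
      have := mul_eq_zero.1 this
      simp [hij0, hjk0] at this
    · exact ⟨i, rfl, hik⟩
  obtain ⟨m₁, n₁, h₁, hm₁, hn₁, hs₁⟩ := B.length_ratio hij0
  obtain ⟨m₂, n₂, h₂, hm₂, hn₂, hs₂⟩ := B.length_ratio hjk0
  obtain ⟨m₃, n₃, h₃, -, -, hs₃⟩ := B.length_ratio hi'k
  rw [← hm₁, ← hn₁] at hij
  rw [← hm₂, ← hn₂] at hjk
  rw [hi'] at h₃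
  have hk := B.ne_zero k
  simp only [Prod.mk.injEq] at hs₁ hs₂ hs₃
  have hs₁' : (m₁ = 2 ∨ m₁ = 3) ∧ n₁ = 1 := by omega
  have hs₂' : (m₂ = 2 ∨ m₂ = 3) ∧ n₂ = 1 := by omega
  clear hs₁ hs₂ hij hjk
  obtain ⟨hm₁' | hm₁', hn₁'⟩ := hs₁' <;> obtain ⟨hm₂' | hm₂', hn₂'⟩ := hs₂' <;>
  rcases hs₃ with ⟨ha, hb⟩ | ⟨ha, hb⟩ | ⟨ha, hb⟩ | ⟨ha, hb⟩ | ⟨ha, hb⟩ | ⟨ha, hb⟩ <;>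
  rw [hm₁', hn₁'] at h₁ <;> rw [hm₂', hn₂'] at h₂ <;> rw [ha, hb] at h₃ <;>
  push_cast at h₁ h₂ h₃ <;> grind

/-- A reduced crystallographic root system in a space of dimension `d` has at most `2 d² (d + 1)`
roots. -/
theorem card_index_le [FiniteDimensional K V] (P : RootPairing ι K V N) [P.IsCrystallographic]
    [P.IsReduced] :
    Nat.card ι ≤ 4 * (finrank K V * (finrank K V + 1).choose 2) := by
  classical
  have := Fintype.ofFinite ι
  have hset := P.pairingIn_pairingIn_mem_set_of_isCrystal_of_isRed
  have hkey (i j : ι) (h : |P.pairingIn ℤ i j| = |P.pairingIn ℤ j i|) :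
      P.pairingIn ℤ i j = P.pairingIn ℤ j i := by
    have := hset i j
    simp only [Set.mem_insert_iff, Set.mem_singleton_iff, Prod.mk.injEq] at this
    rcases this with hv | hv | hv | hv | hv | hv | hv | hv | hv | hv | hv | hv | hv <;>
      rw [hv.1, hv.2] at h ⊢ <;> simp at h
  -- The roots strictly longer than some root nonorthogonal to them.
  let L : Finset ι :=
    Finset.univ.filter fun i ↦ ∃ j, |P.pairingIn ℤ j i| < |P.pairingIn ℤ i j|
  have hL : L.card ≤ 2 * (finrank K V * (finrank K V + 1).choose 2) := by
    refine P.card_le_of_pairing_symm L fun i hi j hj ↦ hkey i j ?_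
    simp only [L, Finset.mem_filter, Finset.mem_univ, true_and] at hi hj
    obtain ⟨i', hi⟩ := hi
    obtain ⟨j', hj⟩ := hj
    exact le_antisymm (not_lt.1 fun h ↦ P.no_three_lengths h hj)
      (not_lt.1 fun h ↦ P.no_three_lengths h hi)
  have hT : Lᶜ.card ≤ 2 * (finrank K V * (finrank K V + 1).choose 2) := by
    refine P.card_le_of_pairing_symm Lᶜ fun i hi j hj ↦ hkey i j ?_
    simp only [L, Finset.compl_filter, Finset.mem_filter, Finset.mem_univ, true_and, not_exists,
      not_lt] at hi hj
    exact le_antisymm (hi j) (hj i)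
  have := Finset.card_add_card_compl L
  rw [Nat.card_eq_fintype_card]
  omega

end RootPairing

open LieAlgebra LieModule Module in
theorem LieAlgebra.IsKilling.finrank_le_add_card_root {K L : Type*} [Field K] [CharZero K]
    [LieRing L] [LieAlgebra K L] [FiniteDimensional K L] [IsKilling K L]
    (H : LieSubalgebra K L) [H.IsCartanSubalgebra] [IsTriangularizable K H L] :
    finrank K L ≤ finrank K H + H.root.card := by
  classical
  have hds := DirectSum.isInternal_submodule_of_iSupIndep_of_iSup_eq_top
    (LieSubmodule.iSupIndep_toSubmodule.mpr <| iSupIndep_genWeightSpace' K H L)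
    (LieSubmodule.iSup_toSubmodule_eq_top.mpr <| iSup_genWeightSpace_eq_top' K H L)
  have hsum : finrank K L = ∑ χ : Weight K H L, finrank K (rootSpace H χ) := by
    rw [← (LinearEquiv.ofBijective (DirectSum.coeLinearMap _) hds).finrank_eq, finrank_directSum]
    rfl
  rw [hsum, ← Finset.sum_filter_add_sum_filter_not _ (fun χ : Weight K H L ↦ χ.IsZero)]
  refine Nat.add_le_add ?_ ?_
  · have hz : (Finset.univ.filter fun χ : Weight K H L ↦ χ.IsZero).card ≤ 1 :=
      Finset.card_le_one.2 fun a ha b hb ↦ by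
        simp only [Finset.mem_filter, Finset.mem_univ, true_and] at ha hb
        exact DFunLike.coe_injective (Eq.trans ha hb.symm)
    refine (Finset.sum_le_card_nsmul _ _ (finrank K H) fun χ hχ ↦ ?_).trans
      (by simpa using Nat.mul_le_mul_right (finrank K H) hz)
    have h0 : (χ : H → K) = 0 := (Finset.mem_filter.1 hχ).2
    rw [h0, rootSpace_zero_eq]
    exact le_rfl
  · refine (Finset.sum_le_card_nsmul _ _ 1 fun χ hχ ↦ ?_).trans ?_
    · exact (finrank_rootSpace_eq_one χ (Finset.mem_filter.1 hχ).2).le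
    · rw [smul_eq_mul, mul_one]

/-- Let `s` be a finite-dimensional semisimple Lie algebra over `ℂ` of rank `ρ` (the
dimension of a Cartan subalgebra). Then `dim s ≤ ρ * (2 * ρ ^ 2 + 2 * ρ + 112)`. -/
theorem dim_semisimple_le_of_rank
    (s : Type*) [LieRing s] [LieAlgebra ℂ s] [FiniteDimensional ℂ s]
    [LieAlgebra.IsSemisimple ℂ s]
    (H : LieSubalgebra ℂ s) (hH : H.IsCartanSubalgebra) (ρ : ℕ)
    (hρ : Module.finrank ℂ H = ρ) :
    Module.finrank ℂ s ≤ ρ * (2 * ρ ^ 2 + 2 * ρ + 112) := by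
  have h₁ := LieAlgebra.IsKilling.finrank_le_add_card_root H
  have h₂ := (LieAlgebra.IsKilling.rootSystem H).card_index_le
  have h₃ : (ρ + 1).choose 2 * 2 = (ρ + 1) * ρ := by
    rw [Nat.choose_two_right, Nat.div_mul_cancel (Nat.even_mul_pred_self _).two_dvd,
      Nat.add_sub_cancel]
  rw [Nat.card_eq_fintype_card, Fintype.card_coe, Subspace.dual_finrank_eq, hρ] at h₂
  rw [hρ] at h₁
  nlinarith
end
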